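/- Let X and W be subcategories of A such that W is X-injective (W ⊆ X^⊥) and W is a cogenerator for X. Then W = X ∩ X^⊥ = X ∩ Ŵ, and Ŵ = X̂ ∩ X^⊥. -/

import Mathlib

/-!
If `M ∈ X ∩ X^⊥`, the embedding of `M` into an object of `W` with cokernel in `X` splits, so
`M ∈ W`; together with dimension shifting, which gives `Ŵ ⊆ X^⊥`, this settles everything except
`X̂ ∩ X^⊥ ⊆ Ŵ`. If `X` were closed under extensions, one could use the Auslander–Buchweitz
approximation `0 → Y → E → M → 0` of `M ∈ X̂`, with `E ∈ X` and `Y ∈ Ŵ`: for `M ∈ X^⊥` also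
`E ∈ X^⊥`, hence `E ∈ W` and `M ∈ Ŵ`. To avoid that assumption, replace `X` by its extension
closure: this does not change `X^⊥`, and by the horseshoe lemma `W` remains a cogenerator.
-/

open CategoryTheory CategoryTheory.Limits CategoryTheory.Abelian ZeroObject

universe w v u

namespace FrobeniusPaper

variable {C : Type u} [Category.{v} C] [Abelian C]

/-- `f, g` form a short exact sequence `0 → A → B → D → 0` in the abelian category `C`. -/
def IsSES {A B D : C} (f : A ⟶ B) (g : B ⟶ D) : Prop :=
  ∃ w : f ≫ g = 0, (ShortComplex.mk f g w).ShortExact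

/-- A "subcategory" in the sense of the paper: a full additive subcategory, regarded as the
predicate of membership for its objects, closed under isomorphisms and direct summands. -/
structure IsSubcat (X : C → Prop) : Prop where
  zero : X 0
  iso_closed : ∀ {A B : C}, (A ≅ B) → X A → X B
  biprod_closed : ∀ {A B : C}, X A → X B → X (A ⊞ B)
  summand_closed : ∀ {A M : C} (i : A ⟶ M) (p : M ⟶ A), i ≫ p = 𝟙 A → X M → X A

/-- `Hat X n M` means `M ∈ X̂ₙ`, i.e. there is an exact sequence
`0 → Xₙ → ⋯ → X₁ → X₀ → M → 0` with all `Xᵢ ∈ X`. -/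
def Hat (X : C → Prop) : ℕ → C → Prop
  | 0, M => X M
  | (n + 1), M => ∃ (K E : C) (f : K ⟶ E) (g : E ⟶ M), IsSES f g ∧ X E ∧ Hat X n K

/-- `M ∈ X̂ = ⋃ₙ X̂ₙ`. -/
def HatAll (X : C → Prop) (M : C) : Prop := ∃ n, Hat X n M

/-- `W` is a cogenerator for `X`. -/
def IsCogenerator (W X : C → Prop) : Prop :=
  (∀ M, W M → X M) ∧
    ∀ M, X M → ∃ (W₀ X' : C) (f : M ⟶ W₀) (g : W₀ ⟶ X'), IsSES f g ∧ W W₀ ∧ X X'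

/-- `W` is a generator for `X`. -/
def IsGenerator (W X : C → Prop) : Prop :=
  (∀ M, W M → X M) ∧
    ∀ M, X M → ∃ (X' W₀ : C) (f : X' ⟶ W₀) (g : W₀ ⟶ M), IsSES f g ∧ W W₀ ∧ X X'

/-- `X` is closed under extensions. -/
def ExtClosed (X : C → Prop) : Prop :=
  ∀ ⦃A B D : C⦄ (f : A ⟶ B) (g : B ⟶ D), IsSES f g → X A → X D → X B

/-- `X` is closed under kernels of epimorphisms. -/
def KerEpiClosed (X : C → Prop) : Prop :=
  ∀ ⦃A B D : C⦄ (f : A ⟶ B) (g : B ⟶ D), IsSES f g → X B → X D → X A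

/-- A thick subcategory: closed under direct summands and two-out-of-three for
short exact sequences. -/
def IsThickSub (T : C → Prop) : Prop :=
  IsSubcat T ∧ ∀ ⦃A B D : C⦄ (f : A ⟶ B) (g : B ⟶ D), IsSES f g →
    (T A → T B → T D) ∧ (T A → T D → T B) ∧ (T B → T D → T A)

/-- Membership in `Thick(X)`, the smallest thick subcategory containing `X`. -/
def thickClosure (X : C → Prop) (M : C) : Prop :=
  ∀ T : C → Prop, IsThickSub T → (∀ N, X N → T N) → T M

variable [HasExt.{w} C]

/-- `Y ∈ X^⊥`, i.e. `Extⁱ(M, Y) = 0` for all `i ≥ 1` and `M ∈ X`. -/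
def rightPerp (X : C → Prop) (Y : C) : Prop :=
  ∀ M, X M → ∀ i : ℕ, 1 ≤ i → Subsingleton (Abelian.Ext M Y i)

/-- A left Frobenius pair `(X, W)`. -/
structure LeftFrobenius (X W : C → Prop) : Prop where
  subX : IsSubcat X
  subW : IsSubcat W
  extClosed : ExtClosed X
  kerEpiClosed : KerEpiClosed X
  cogen : IsCogenerator W X
  perp : ∀ M, W M → rightPerp X M

/-- A strong left Frobenius pair `(X, W)`. -/
structure StrongLeftFrobenius (X W : C → Prop) extends LeftFrobenius X W : Prop where
  gen : IsGenerator W X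
  proj : ∀ M N, W M → X N → ∀ i : ℕ, 1 ≤ i → Subsingleton (Abelian.Ext M N i)

/-- A cotorsion pair `(U, V)` on an extension-closed subcategory `B` of `C`. -/
structure CotorsionPairOn (B U V : C → Prop) : Prop where
  subU : ∀ M, U M → B M
  subV : ∀ M, V M → B M
  isoU : ∀ {A B' : C}, (A ≅ B') → U A → U B'
  summandU : ∀ {A M : C} (i : A ⟶ M) (p : M ⟶ A), i ≫ p = 𝟙 A → U M → U A
  isoV : ∀ {A B' : C}, (A ≅ B') → V A → V B'
  summandV : ∀ {A M : C} (i : A ⟶ M) (p : M ⟶ A), i ≫ p = 𝟙 A → V M → V A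
  ext1 : ∀ M N, U M → V N → Subsingleton (Abelian.Ext M N 1)
  res : ∀ M, B M → ∃ (V₀ U₀ : C) (f : V₀ ⟶ U₀) (g : U₀ ⟶ M), IsSES f g ∧ U U₀ ∧ V V₀
  cores : ∀ M, B M → ∃ (V₀ U₀ : C) (f : M ⟶ V₀) (g : V₀ ⟶ U₀), IsSES f g ∧ U U₀ ∧ V V₀

end FrobeniusPaper

namespace FrobeniusPaper

section ShortExactSequences

variable {C : Type u} [Category.{v} C] [Abelian C]

/-- Describing the cokernel as a pushout along `A ⟶ 0` reduces diagram chases to pasting squares. -/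
theorem isSES_iff_isPushout {A B D : C} {f : A ⟶ B} {g : B ⟶ D} :
    IsSES f g ↔ Mono f ∧ IsPushout f (0 : A ⟶ 0) g (0 : 0 ⟶ D) := by
  constructor
  · rintro ⟨w, hS⟩
    have := hS.epi_g
    refine ⟨hS.mono_f, ⟨by simp [w]⟩, ⟨PushoutCocone.IsColimit.mk _
      (fun s => hS.exact.desc s.inl (by simpa using s.condition))
      (fun s => hS.exact.g_desc _ _) (fun s => (isZero_zero C).eq_of_src _ _)
      (fun s m hm _ => ?_)⟩⟩
    rw [← cancel_epi g, hm]
    exact (hS.exact.g_desc _ _).symm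
  · rintro ⟨hf, sq⟩
    have w : f ≫ g = 0 := by simpa using sq.w
    have hg : IsColimit (CokernelCofork.ofπ g w) := CokernelCofork.IsColimit.ofπ _ _
      (fun t ht => sq.desc t 0 (by simpa using ht)) (fun t ht => sq.inl_desc _ _ _)
      (fun t ht m hm => sq.hom_ext (by simpa using hm) ((isZero_zero C).eq_of_src _ _))
    obtain ⟨hS, hepi⟩ := (ShortComplex.mk f g w).exact_and_epi_g_iff_g_is_cokernel.2 ⟨hg⟩
    exact ⟨w, { exact := hS, mono_f := hf, epi_g := hepi }⟩

theorem isSES_zero_id (M : C) : IsSES (0 : 0 ⟶ M) (𝟙 M) :=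
  isSES_iff_isPushout.2 ⟨inferInstance, IsPushout.zero_left M⟩

namespace IsSES

theorem exists_of_isPushout {A B D A' P : C} {f : A ⟶ B} {g : B ⟶ D} (h : IsSES f g)
    {p : A ⟶ A'} {i : B ⟶ P} {j : A' ⟶ P} (sq : IsPushout f p i j) :
    ∃ g' : P ⟶ D, IsSES j g' := by
  obtain ⟨hf, hD⟩ := isSES_iff_isPushout.1 h
  have hg : f ≫ g = p ≫ 0 := by simp [h.choose]
  have houter : IsPushout f (p ≫ 0) (i ≫ sq.desc g 0 hg) (0 : 0 ⟶ D) := by simpa using hD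
  exact ⟨sq.desc g 0 hg, isSES_iff_isPushout.2
    ⟨(MorphismProperty.monomorphisms C).of_isPushout sq.flip hf,
      houter.of_top (by simp) sq⟩⟩

/-- The third isomorphism theorem `(L / K) / (M / K) ≅ L / M` for `K ⊆ M ⊆ L`. -/
theorem exists_comp {K M Q L N : C} {k : K ⟶ M} {p : M ⟶ Q} {a : M ⟶ L} {b : L ⟶ N}
    (hM : IsSES k p) (hL : IsSES a b) :
    ∃ (R : C) (r : L ⟶ R) (u : Q ⟶ R) (t : R ⟶ N), IsSES (k ≫ a) r ∧ IsSES u t := by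
  have sq := IsPushout.of_hasPushout a p
  obtain ⟨t, ht⟩ := hL.exists_of_isPushout sq
  obtain ⟨hk, hQ⟩ := isSES_iff_isPushout.1 hM
  obtain ⟨ha, -⟩ := isSES_iff_isPushout.1 hL
  have hR : IsPushout (k ≫ a) (0 : K ⟶ 0) (pushout.inl a p) (0 : 0 ⟶ pushout a p) := by
    simpa using hQ.paste_horiz sq
  exact ⟨_, pushout.inl a p, pushout.inr a p, t, isSES_iff_isPushout.2 ⟨mono_comp k a, hR⟩, ht⟩

theorem isPushout_biprod_lift {A B D I : C} {f : A ⟶ B} {g : B ⟶ D} (h : IsSES f g)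
    (b : B ⟶ I) : IsPushout f (f ≫ b) (biprod.lift b g) biprod.inl := by
  obtain ⟨w, hS⟩ := h
  have := hS.epi_g
  refine ⟨⟨by ext <;> simp [w]⟩, ⟨PushoutCocone.IsColimit.mk _
    (fun s => biprod.desc s.inr (hS.exact.desc (s.inl - b ≫ s.inr)
      (by simpa [sub_eq_zero] using s.condition)))
    (fun s => ?_) (fun s => by simp) (fun s m hinl hinr => ?_)⟩⟩
  · have := hS.exact.g_desc (s.inl - b ≫ s.inr) (by simpa [sub_eq_zero] using s.condition)
    dsimp at this
    simp [biprod.lift_desc, this]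
  · refine biprod.hom_ext' _ _ (by simpa using hinr) ?_
    have hg : g ≫ biprod.inr ≫ m = s.inl - b ≫ s.inr := by
      rw [← hinl, ← hinr, biprod.lift_eq]
      simp
    rw [biprod.inr_desc, ← cancel_epi g, hg]
    exact (hS.exact.g_desc _ _).symm

/-- The map `b`, which extends the embedding of `A` into `I`, exists if `Ext¹(D, I) = 0`. -/
theorem horseshoe {A B D I A' J D' : C} {f : A ⟶ B} {g : B ⟶ D} {b : B ⟶ I} {a' : I ⟶ A'}
    {d : D ⟶ J} {d' : J ⟶ D'} (h : IsSES f g) (hA : IsSES (f ≫ b) a') (hD : IsSES d d') :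
    ∃ (E : C) (q : I ⊞ J ⟶ E) (u : A' ⟶ E) (t : E ⟶ D'),
      IsSES (biprod.lift b (g ≫ d)) q ∧ IsSES u t := by
  have sq : IsPushout d biprod.inr biprod.inr (biprod.map (𝟙 I) d) := by
    have hIJ : IsPushout ((0 : 0 ⟶ D) ≫ d) (0 : 0 ⟶ I) biprod.inr
        (biprod.inl ≫ biprod.map (𝟙 I) d) := by
      simpa using (IsPushout.of_has_biproduct I J).flip
    exact hIJ.of_left (by simp) (IsPushout.of_has_biproduct I D).flip
  obtain ⟨r, hB⟩ := hA.exists_of_isPushout (h.isPushout_biprod_lift b).flip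
  obtain ⟨s, hID⟩ := hD.exists_of_isPushout sq
  have hcomp : biprod.lift b g ≫ biprod.map (𝟙 I) d = biprod.lift b (g ≫ d) := by ext <;> simp
  exact hcomp ▸ hB.exists_comp hID

end IsSES

end ShortExactSequences

section Resolutions

variable {C : Type u} [Category.{v} C] [Abelian C] {X X' W : C → Prop}

theorem HatAll.of_isSES {K E M : C} {f : K ⟶ E} {g : E ⟶ M} (h : IsSES f g) (hE : X E)
    (hK : HatAll X K) : HatAll X M :=
  let ⟨n, hn⟩ := hK
  ⟨n + 1, K, E, f, g, h, hE, hn⟩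

theorem Hat.mono (h : ∀ M, X M → X' M) : ∀ {n : ℕ} {M : C}, Hat X n M → Hat X' n M
  | 0, M, hM => h M hM
  | _ + 1, _, ⟨K, E, f, g, hS, hE, hK⟩ => ⟨K, E, f, g, hS, h E hE, hK.mono h⟩

theorem HatAll.mono (h : ∀ M, X M → X' M) {M : C} (hM : HatAll X M) : HatAll X' M :=
  hM.imp fun _ hn => hn.mono h

theorem Hat.exists_approximation (hX : ExtClosed X) (hW : W 0) (hcog : IsCogenerator W X) :
    ∀ {n : ℕ} {M : C}, Hat X n M →
      ∃ (Y E : C) (f : Y ⟶ E) (g : E ⟶ M), IsSES f g ∧ X E ∧ HatAll W Y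
  | 0, M, hM => ⟨0, M, 0, 𝟙 M, isSES_zero_id M, hM, 0, hW⟩
  | _ + 1, M, ⟨K, X₀, k, _, hM, hX₀, hK⟩ => by
    obtain ⟨Y, E, y, p, hYE, hE, hY⟩ := hK.exists_approximation hX hW hcog
    obtain ⟨W₀, X', a, b, hEW, hW₀, hX'⟩ := hcog.2 E hE
    obtain ⟨Q, r, u, t, hQ, hKQ⟩ := hYE.exists_comp hEW
    have sq := IsPushout.of_hasPushout k u
    obtain ⟨g, hg⟩ := hM.exists_of_isPushout sq
    obtain ⟨c, hc⟩ := hKQ.exists_of_isPushout sq.flip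
    exact ⟨Q, pushout k u, _, g, hg, hX _ _ hc hX₀ hX', .of_isSES hQ hW₀ hY⟩

/-- The extension closure of `X`, i.e. the smallest class of objects containing `X` and closed under
extensions. Approximations are taken in it because `X` itself need not be closed under extensions.
A zero object is not adjoined. -/
inductive ExtClosure (X : C → Prop) : C → Prop
  | of {M : C} : X M → ExtClosure X M
  | ext {A B D : C} (f : A ⟶ B) (g : B ⟶ D) :
      IsSES f g → ExtClosure X A → ExtClosure X D → ExtClosure X B

theorem extClosed_extClosure (X : C → Prop) : ExtClosed (ExtClosure X) :=
  fun _ _ _ => .ext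

end Resolutions

section RightPerp

variable {C : Type u} [Category.{v} C] [Abelian C] [HasExt.{w} C] {X W : C → Prop}

theorem IsSES.exists_extension {A B D Z : C} {f : A ⟶ B} {g : B ⟶ D} (h : IsSES f g)
    (hZ : Subsingleton (Abelian.Ext D Z 1)) (a : A ⟶ Z) : ∃ b : B ⟶ Z, f ≫ b = a := by
  obtain ⟨w, hS⟩ := h
  obtain ⟨x, hx⟩ := Ext.contravariant_sequence_exact₁ hS Z (Ext.mk₀ a) (n₁ := 1) rfl
    (hZ.elim _ _)
  obtain ⟨b, rfl⟩ := (Ext.mk₀_bijective _ _).2 x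
  exact ⟨b, (Ext.mk₀_bijective _ _).1 (by rw [← hx, Ext.mk₀_comp_mk₀])⟩

theorem extClosed_rightPerp (X : C → Prop) : ExtClosed (rightPerp X) := by
  rintro A B D f g ⟨w, hS⟩ hA hD M hM i hi
  refine subsingleton_of_forall_eq 0 fun x => ?_
  obtain ⟨y, rfl⟩ := Ext.covariant_sequence_exact₂ M hS x ((hD M hM i hi).elim _ _)
  rw [(hA M hM i hi).elim y 0, Ext.zero_comp]

theorem rightPerp.of_isSES {A B D : C} {f : A ⟶ B} {g : B ⟶ D} (h : IsSES f g)
    (hA : rightPerp X A) (hB : rightPerp X B) : rightPerp X D := by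
  obtain ⟨w, hS⟩ := h
  intro M hM i hi
  refine subsingleton_of_forall_eq 0 fun x => ?_
  obtain ⟨y, rfl⟩ := Ext.covariant_sequence_exact₃ M hS x rfl
    ((hA M hM (i + 1) (by lia)).elim _ _)
  rw [(hB M hM i hi).elim y 0, Ext.zero_comp]

theorem rightPerp.of_hat (hinj : ∀ M, W M → rightPerp X M) :
    ∀ {n : ℕ} {M : C}, Hat W n M → rightPerp X M
  | 0, M, hM => hinj M hM
  | _ + 1, _, ⟨_, E, _, _, hS, hE, hK⟩ => .of_isSES hS (.of_hat hinj hK) (hinj E hE)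

theorem rightPerp.extClosure {Y : C} (hY : rightPerp X Y) : rightPerp (ExtClosure X) Y := by
  intro M hM i hi
  induction hM with
  | of hM => exact hY _ hM i hi
  | ext f g h _ _ hA hD =>
    obtain ⟨w, hS⟩ := h
    refine subsingleton_of_forall_eq 0 fun x => ?_
    obtain ⟨y, rfl⟩ := Ext.contravariant_sequence_exact₂ hS Y x (hA.elim _ _)
    rw [hD.elim y 0, Ext.comp_zero]

theorem IsCogenerator.extClosure (hW : ∀ {A B : C}, W A → W B → W (A ⊞ B))
    (hinj : ∀ M, W M → rightPerp X M) (hcog : IsCogenerator W X) :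
    IsCogenerator W (ExtClosure X) := by
  refine ⟨fun M hM => .of (hcog.1 M hM), fun M hM => ?_⟩
  induction hM with
  | of hM =>
    obtain ⟨W₀, X', f, g, hS, hW₀, hX'⟩ := hcog.2 _ hM
    exact ⟨W₀, X', f, g, hS, hW₀, .of hX'⟩
  | ext f g h _ hD ihA ihD =>
    obtain ⟨I, A', a, a', hAI, hI, hA'⟩ := ihA
    obtain ⟨J, D', d, d', hDJ, hJ, hD'⟩ := ihD
    obtain ⟨b, rfl⟩ := h.exists_extension ((hinj I hI).extClosure _ hD 1 le_rfl) a
    obtain ⟨E, q, u, t, hE, hAD⟩ := h.horseshoe hAI hDJ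
    exact ⟨I ⊞ J, E, _, q, hE, hW hI hJ, .ext u t hAD hA' hD'⟩

theorem IsCogenerator.mem_of_rightPerp
    (hW : ∀ {A M : C} (i : A ⟶ M) (p : M ⟶ A), i ≫ p = 𝟙 A → W M → W A)
    (hcog : IsCogenerator W X) {M : C} (hM : X M) (hperp : rightPerp X M) : W M := by
  obtain ⟨W₀, X', f, g, hS, hW₀, hX'⟩ := hcog.2 M hM
  obtain ⟨r, hr⟩ := hS.exists_extension (hperp X' hX' 1 le_rfl) (𝟙 M)
  exact hW f r hr hW₀

theorem HatAll.of_rightPerp (hW : IsSubcat W) (hinj : ∀ M, W M → rightPerp X M)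
    (hcog : IsCogenerator W X) {M : C} (hM : HatAll X M) (hperp : rightPerp X M) :
    HatAll W M := by
  have hcog' : IsCogenerator W (ExtClosure X) := hcog.extClosure hW.biprod_closed hinj
  obtain ⟨n, hM'⟩ : HatAll (ExtClosure X) M := hM.mono fun _ => .of
  obtain ⟨Y, E, f, g, hS, hE, m, hY⟩ :=
    hM'.exists_approximation (extClosed_extClosure X) hW.zero hcog'
  have hEperp : rightPerp X E := extClosed_rightPerp X f g hS (.of_hat hinj hY) hperp
  have hEW : W E := hcog'.mem_of_rightPerp hW.summand_closed hE hEperp.extClosure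
  exact .of_isSES hS hEW ⟨m, hY⟩

end RightPerp

theorem statement6_general {C : Type u} [Category.{v} C] [Abelian C] [HasExt.{w} C]
    (X W : C → Prop) (hW : IsSubcat W)
    (hinj : ∀ M, W M → rightPerp X M) (hcog : IsCogenerator W X) :
    (∀ M, W M ↔ X M ∧ rightPerp X M) ∧
    (∀ M, W M ↔ X M ∧ HatAll W M) ∧
    (∀ M, HatAll W M ↔ HatAll X M ∧ rightPerp X M) := by
  have mem_of_perp {M : C} (hM : X M) (hperp : rightPerp X M) : W M :=
    hcog.mem_of_rightPerp hW.summand_closed hM hperp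
  have perp_of_hat {M : C} : HatAll W M → rightPerp X M := fun ⟨_, hM⟩ => .of_hat hinj hM
  refine ⟨fun M => ⟨fun hM => ⟨hcog.1 M hM, hinj M hM⟩, fun ⟨hX, hperp⟩ => mem_of_perp hX hperp⟩,
    fun M => ⟨fun hM => ⟨hcog.1 M hM, 0, hM⟩, fun ⟨hX, hM⟩ => mem_of_perp hX (perp_of_hat hM)⟩,
    fun M => ⟨fun hM => ⟨hM.mono hcog.1, perp_of_hat hM⟩,
      fun ⟨hX, hperp⟩ => hX.of_rightPerp hW hinj hcog hperp⟩⟩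

/-- If `W` is an `X`-injective cogenerator for `X`, then
`W = X ∩ X^⊥ = X ∩ Ŵ` and `Ŵ = X̂ ∩ X^⊥`. -/
theorem statement6 {C : Type u} [Category.{v} C] [Abelian C]
    [EnoughProjectives C] [EnoughInjectives C] [HasExt.{w} C]
    (X W : C → Prop) (hX : IsSubcat X) (hW : IsSubcat W)
    (hinj : ∀ M, W M → rightPerp X M) (hcog : IsCogenerator W X) :
    (∀ M, W M ↔ X M ∧ rightPerp X M) ∧
    (∀ M, W M ↔ X M ∧ HatAll W M) ∧
    (∀ M, HatAll W M ↔ HatAll X M ∧ rightPerp X M) :=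
  statement6_general X W hW hinj hcog

end FrobeniusPaper
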